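/- arXiv:1511.03108 — 2 statements merged into one kernel-verified Lean document; each statement's English description precedes it below -/
import Mathlib

section
/- Let m, l, T be natural numbers, let S be the (m+l)×(m+l) complex shift matrix with entries S_{p,q} = 1 if q = p + l and 0 otherwise, and let ρ > 0 be a real number. Let Y₁, Y₂ be (m+l)×T complex matrices, let Ȳ₂ consist of the first m rows of Y₂ and Ȳ₁ consist of the last m rows of Y₁ (rows l,…,m+l−1). Then for any T×T complex matrices G and G': Re(Tr(G·Y₂ᴴ·(ρ·S)·Y₁)) ≤ Re(Tr(G'·Y₂ᴴ·(ρ·S)·Y₁)) if and only if Re(Tr(G·Ȳ₂ᴴ·Ȳ₁)) ≤ Re(Tr(G'·Ȳ₂ᴴ·Ȳ₁)). Hence, when the correlation matrix C = ρ·S has a single superdiagonal, the proposed decoding criterion argmax_G Re(Tr(G·Y₂ᴴ·C·Y₁)) selects the same matrices as the conventional differential decoder argmax_G Re(Tr(G·Ȳ₂ᴴ·Ȳ₁)) applied to the reduced received matrices with m = N_R − l rows. (Theorem 3.) -/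
/-!
The shift matrix factors as `S = Pᵀ Q`, where `P` selects the first `m` rows and `Q` the last `m`
rows. Hence `Y₂ᴴ S Y₁ = (P Y₂)ᴴ (Q Y₁) = Ȳ₂ᴴ Ȳ₁`, so the two decoding metrics differ only by the
positive factor `ρ`.
-/

open Matrix Complex

/-- The `l`-th shift matrix of size `m + l`, the pattern of a correlation matrix with a single
nonzero superdiagonal. Entries are compared in `ℕ`, so the shift does not wrap around. -/
def shiftMatrix (R : Type*) [Zero R] [One R] (m l : ℕ) : Matrix (Fin (m + l)) (Fin (m + l)) R :=
  of fun p q => if (q : ℕ) = (p : ℕ) + l then 1 else 0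

theorem shiftMatrix_eq_submatrix_one_mul_submatrix_one (R : Type*) [NonAssocSemiring R] (m l : ℕ) :
    shiftMatrix R m l =
      (1 : Matrix (Fin (m + l)) (Fin (m + l)) R).submatrix id (Fin.castAdd l) *
        (1 : Matrix (Fin (m + l)) (Fin (m + l)) R).submatrix (fun i : Fin m => i.addNat l) id := by
  ext p q
  cases p using Fin.addCases with
  | left i =>
    have haddNat : i.addNat l = q ↔ (q : ℕ) = i + l := by simp [Fin.ext_iff, eq_comm]
    simp [shiftMatrix, mul_apply, one_apply, haddNat, -mul_ite]
  | right j =>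
    have hq : (q : ℕ) ≠ m + j + l := by lia
    have hcast (i : Fin m) : Fin.natAdd m j ≠ Fin.castAdd l i :=
      Fin.ne_of_val_ne (by simp only [Fin.val_natAdd, Fin.val_castAdd]; lia)
    simp [shiftMatrix, mul_apply, hq, hcast]

theorem mul_shiftMatrix_mul {R α β : Type*} [Semiring R] {m l : ℕ}
    (A : Matrix α (Fin (m + l)) R) (B : Matrix (Fin (m + l)) β R) :
    A * shiftMatrix R m l * B =
      A.submatrix id (Fin.castAdd l) * B.submatrix (fun i : Fin m => i.addNat l) id := by
  have hA : A * (1 : Matrix (Fin (m + l)) (Fin (m + l)) R).submatrix id (Fin.castAdd l) =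
      A.submatrix id (Fin.castAdd l) := mul_submatrix_one (Equiv.refl _) _ A
  have hB : (1 : Matrix (Fin (m + l)) (Fin (m + l)) R).submatrix
        (fun i : Fin m => i.addNat l) id * B =
      B.submatrix (fun i : Fin m => i.addNat l) id := one_submatrix_mul _ (Equiv.refl _) B
  rw [shiftMatrix_eq_submatrix_one_mul_submatrix_one, ← Matrix.mul_assoc, hA, Matrix.mul_assoc, hB]

theorem re_trace_mul_smul_shiftMatrix_mul {𝕜 α : Type*} [RCLike 𝕜] [Fintype α] {m l : ℕ}
    (ρ : ℝ) (A : Matrix α (Fin (m + l)) 𝕜) (B : Matrix (Fin (m + l)) α 𝕜) :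
    RCLike.re (A * ((ρ : 𝕜) • shiftMatrix 𝕜 m l) * B).trace =
      ρ * RCLike.re (A.submatrix id (Fin.castAdd l) *
        B.submatrix (fun i : Fin m => i.addNat l) id).trace := by
  rw [Matrix.mul_smul, Matrix.smul_mul, trace_smul, smul_eq_mul, RCLike.re_ofReal_mul,
    mul_shiftMatrix_mul]

theorem shifted_decoding_equiv_general {𝕜 α β : Type*} [RCLike 𝕜] [Fintype α] [Fintype β]
    {m l : ℕ} {ρ : ℝ} (hρ : 0 < ρ)
    (Y₁ : Matrix (Fin (m + l)) α 𝕜) (Y₂ : Matrix (Fin (m + l)) β 𝕜) (G G' : Matrix α β 𝕜) :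
    RCLike.re (G * Y₂ᴴ * ((ρ : 𝕜) • shiftMatrix 𝕜 m l) * Y₁).trace ≤
        RCLike.re (G' * Y₂ᴴ * ((ρ : 𝕜) • shiftMatrix 𝕜 m l) * Y₁).trace ↔
      RCLike.re (G * (Y₂.submatrix (Fin.castAdd l) id)ᴴ
          * Y₁.submatrix (fun i : Fin m => i.addNat l) id).trace ≤
        RCLike.re (G' * (Y₂.submatrix (Fin.castAdd l) id)ᴴ
          * Y₁.submatrix (fun i : Fin m => i.addNat l) id).trace := by
  have hreduce (H : Matrix α β 𝕜) :
      (H * Y₂ᴴ).submatrix id (Fin.castAdd l) = H * (Y₂.submatrix (Fin.castAdd l) id)ᴴ := rfl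
  simp only [re_trace_mul_smul_shiftMatrix_mul, hreduce, mul_le_mul_iff_right₀ hρ]

theorem shifted_decoding_equiv
    (m l T : ℕ) (ρ : ℝ) (hρ : 0 < ρ)
    (S : Matrix (Fin (m + l)) (Fin (m + l)) ℂ)
    (hS : ∀ p q : Fin (m + l), S p q = if (q : ℕ) = (p : ℕ) + l then 1 else 0)
    (Y₁ Y₂ : Matrix (Fin (m + l)) (Fin T) ℂ)
    (G G' : Matrix (Fin T) (Fin T) ℂ) :
    ((G * Y₂ᴴ * ((ρ : ℂ) • S) * Y₁).trace).re ≤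
        ((G' * Y₂ᴴ * ((ρ : ℂ) • S) * Y₁).trace).re ↔
      ((G * (Y₂.submatrix (Fin.castAdd l) id)ᴴ
          * (Y₁.submatrix (fun i : Fin m => i.addNat l) id)).trace).re ≤
        ((G' * (Y₂.submatrix (Fin.castAdd l) id)ᴴ
          * (Y₁.submatrix (fun i : Fin m => i.addNat l) id)).trace).re := by
  obtain rfl : S = shiftMatrix ℂ m l := Matrix.ext hS
  exact shifted_decoding_equiv_general hρ Y₁ Y₂ G G'
end

section
/- Let l be a natural number and let a, b, c be real numbers with a ≥ 0, b ≥ 0, a + b ≤ 1, and c > 0. Define f(n) = ((n − l)·a + (n − l − 1)·b) / (n·(1 + c) − (n − l)·a − (n − l − 1)·b) for real n. Then the denominator of f is strictly positive for all n ≥ l + 1, and f is monotone nondecreasing on the interval [l + 1, ∞). (Observation (a) after Theorem 2: with a = |ρ_l|², b = |ρ_{l+1}|², c = σ²/(N_T P), the equivalent SINR γ of eq. (48) is nondecreasing in the number of receive antennas N_R = n.) -/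
/-!
With `p = a + b` and `q = l * a + (l + 1) * b`, the SINR is `(p * n - q) / ((1 + c - p) * n + q)`,
a linear fractional function of `n` of determinant `p * q + q * (1 + c - p) = (1 + c) * q ≥ 0`.
Such a function is nondecreasing wherever its denominator is positive.
-/

section OrderedField

variable {K : Type*} [Field K] [LinearOrder K] [IsStrictOrderedRing K]

theorem monotoneOn_linear_fractional {p q r s : K} (hdet : 0 ≤ p * s - q * r) :
    MonotoneOn (fun x => (p * x + q) / (r * x + s)) {x | 0 < r * x + s} := by
  intro x hx y hy hxy
  have hcross : 0 ≤ (p * s - q * r) * (y - x) := mul_nonneg hdet (sub_nonneg.2 hxy)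
  refine (div_le_div_iff₀ hx hy).2 ?_
  linear_combination hcross

theorem sinr_nondecreasing_in_antennas_general {l a b c : K} (hc : 0 ≤ 1 + c)
    (hab : a + b < 1 + c) (hloss : 0 ≤ l * a + (l + 1) * b) :
    (∀ n : K, 0 < n → 0 < n * (1 + c) - (n - l) * a - (n - l - 1) * b) ∧
    MonotoneOn (fun n : K =>
        ((n - l) * a + (n - l - 1) * b) / (n * (1 + c) - (n - l) * a - (n - l - 1) * b))
      (Set.Ioi 0) := by
  have hnum (n : K) :
      (n - l) * a + (n - l - 1) * b = (a + b) * n + -(l * a + (l + 1) * b) := by ring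
  have hden (n : K) :
      n * (1 + c) - (n - l) * a - (n - l - 1) * b =
        (1 + c - (a + b)) * n + (l * a + (l + 1) * b) := by ring
  have hdet : 0 ≤ (a + b) * (l * a + (l + 1) * b) -
      -(l * a + (l + 1) * b) * (1 + c - (a + b)) :=
    calc
      0 ≤ (1 + c) * (l * a + (l + 1) * b) := mul_nonneg hc hloss
      _ = _ := by ring
  have hpos (n : K) (hn : 0 < n) : 0 < (1 + c - (a + b)) * n + (l * a + (l + 1) * b) :=
    add_pos_of_pos_of_nonneg (mul_pos (sub_pos.2 hab) hn) hloss
  simp only [hnum, hden]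
  exact ⟨hpos, (monotoneOn_linear_fractional hdet).mono hpos⟩

end OrderedField

theorem sinr_nondecreasing_in_antennas
    (l : ℕ) (a b c : ℝ) (ha : 0 ≤ a) (hb : 0 ≤ b) (hab : a + b ≤ 1) (hc : 0 < c) :
    (∀ n : ℝ, (l : ℝ) + 1 ≤ n →
      0 < n * (1 + c) - (n - l) * a - (n - l - 1) * b) ∧
    MonotoneOn (fun n : ℝ =>
        ((n - l) * a + (n - l - 1) * b) / (n * (1 + c) - (n - l) * a - (n - l - 1) * b))
      (Set.Ici ((l : ℝ) + 1)) := by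
  have hdomain (n : ℝ) (hn : (l : ℝ) + 1 ≤ n) : 0 < n := l.cast_add_one_pos.trans_le hn
  obtain ⟨hpos, hmono⟩ := sinr_nondecreasing_in_antennas_general (l := (l : ℝ))
    (by positivity) (show a + b < 1 + c by linarith) (by positivity)
  exact ⟨fun n hn => hpos n (hdomain n hn), hmono.mono hdomain⟩
end
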